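/- Let Γ be a connected bipartite (δ_1,δ_2)-semiregular graph on n = n_1 + n_2 vertices with d+1 distinct eigenvalues, where d is even and m(0) ≠ |n_1 − n_2|. Then the average number of vertices at distance d from a vertex of V_1 is at most the value at λ_0 of the highest-degree orthogonal polynomial for ⟨·,·⟩_{V_1}: k̄_{1,d} ≤ p_{1,d}(λ_0). -/

import Mathlib

open Polynomial Finset Matrix

/-- The discrete scalar product `⟨f,g⟩ = ∑_{i∈s} w i · f(λ i) · g(λ i)` on a mesh. -/
def discInner (s : Finset ℕ) (lam w : ℕ → ℝ) (f g : Polynomial ℝ) : ℝ :=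
  ∑ i ∈ s, w i * f.eval (lam i) * g.eval (lam i)

/-- `Γ_i(u)`: the set of vertices at distance `i` from `u`. -/
noncomputable def sphere {V : Type*} [Fintype V] [DecidableEq V] (G : SimpleGraph V)
    (u : V) (i : ℕ) : Finset V :=
  Finset.univ.filter (fun v => G.dist u v = i)

/-- The diagonal of a symmetric idempotent consists of squared row norms. -/
theorem diag_eq_sum_sq {V : Type*} [Fintype V] {B : Matrix V V ℝ} (hs : B.IsSymm) (hi : B * B = B) (u : V) :
    B u u = ∑ v, B u v ^ 2 := by
  conv_lhs => rw [← hi]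
  rw [Matrix.mul_apply]
  exact sum_congr rfl fun v _ => by rw [hs.apply, sq]

section SpectralDecomposition

variable {V : Type*} [Fintype V] [DecidableEq V] {A : Matrix V V ℝ} {d : ℕ} {lam : ℕ → ℝ}
  {E : ℕ → Matrix V V ℝ}

/-- A polynomial in `A` acts on a matrix of eigencolumns by its value at the eigenvalue. -/
theorem aeval_mul_of_mul_eq_smul {B : Matrix V V ℝ} {μ : ℝ} (h : A * B = μ • B) (f : ℝ[X]) :
    aeval A f * B = f.eval μ • B := by
  induction f using Polynomial.induction_on' with
  | add p q hp hq => simp [add_mul, add_smul, hp, hq]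
  | monomial n a =>
    have hpow : A ^ n * B = μ ^ n • B := by
      induction n with
      | zero => simp
      | succ n ih => rw [pow_succ, mul_assoc, h, mul_smul_comm, ih, smul_smul, pow_succ, mul_comm]
    rw [aeval_monomial, mul_assoc, hpow, eval_monomial, ← Algebra.smul_def, smul_smul]

theorem aeval_eq_sum_eval_smul (hsum : ∑ i ∈ range (d + 1), E i = 1)
    (heig : ∀ i ≤ d, A * E i = lam i • E i) (f : ℝ[X]) :
    aeval A f = ∑ i ∈ range (d + 1), f.eval (lam i) • E i := by
  rw [← mul_one (aeval A f), ← hsum, mul_sum]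
  exact sum_congr rfl fun i hi =>
    aeval_mul_of_mul_eq_smul (heig i (Nat.lt_succ_iff.mp (mem_range.mp hi))) f

/-- Every eigenvalue of `A` is at most the largest eigenvalue of its decomposition. -/
theorem eigenvalue_le_lam_zero (hlam : StrictAntiOn lam (Set.Iic d))
    (hsym : ∀ i ≤ d, (E i).IsSymm) (hA : A.IsSymm)
    (hsum : ∑ i ∈ range (d + 1), E i = 1)
    (heig : ∀ i ≤ d, A * E i = lam i • E i) {x : V → ℝ} (hx : x ≠ 0) {θ : ℝ}
    (hθ : A *ᵥ x = θ • x) : θ ≤ lam 0 := by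
  have hex : ∃ i ≤ d, E i *ᵥ x ≠ 0 := by
    by_contra! h
    apply hx
    rw [← one_mulVec x, ← hsum, sum_mulVec]
    exact sum_eq_zero fun i hi => h i (Nat.lt_succ_iff.mp (mem_range.mp hi))
  obtain ⟨i, hi, hne⟩ := hex
  have hcomm : E i * A = lam i • E i := by
    have := congrArg Matrix.transpose (heig i hi)
    rwa [transpose_mul, transpose_smul, (hsym i hi).eq, hA.eq] at this
  have key : (θ - lam i) • (E i *ᵥ x) = 0 := by
    rw [sub_smul, ← mulVec_smul, ← hθ, mulVec_mulVec, hcomm, smul_mulVec, sub_self]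
  have : θ = lam i := by
    rcases smul_eq_zero.mp key with h | h
    · linarith
    · exact absurd h hne
  rw [this]
  exact hlam.antitoneOn (Set.mem_Iic.mpr (Nat.zero_le d)) (Set.mem_Iic.mpr hi) (Nat.zero_le i)

end SpectralDecomposition

/-- Parity of walks in a bipartite graph. -/
theorem even_length_iff_mem_iff_mem {V : Type*} [Fintype V] [DecidableEq V]
    {G : SimpleGraph V} {V1 V2 : Finset V} (hcover : V1 ∪ V2 = univ)
    (hind1 : ∀ u ∈ V1, ∀ v ∈ V1, ¬ G.Adj u v)
    (hind2 : ∀ u ∈ V2, ∀ v ∈ V2, ¬ G.Adj u v) {u v : V} (p : G.Walk u v) :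
    Even p.length ↔ (u ∈ V1 ↔ v ∈ V1) := by
  have hV2 : ∀ x, x ∉ V1 → x ∈ V2 := fun x hx =>
    (mem_union.mp (hcover ▸ mem_univ x : x ∈ V1 ∪ V2)).resolve_left hx
  induction p with
  | nil => simp
  | @cons a b c hab q ih =>
    have : a ∈ V1 ↔ b ∉ V1 :=
      ⟨fun ha hb => hind1 a ha b hb hab,
        fun hb => by_contra fun ha => hind2 a (hV2 a ha) b (hV2 b hb) hab⟩
    rw [SimpleGraph.Walk.length_cons, Nat.even_add_one]
    tauto

section Graph

variable {V : Type*} [Fintype V] {G : SimpleGraph V} [DecidableRel G.Adj]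

/-- The weighted Laplacian form attached to a positive eigenvector `y`. -/
theorem sum_adjMatrix_mul_sq {y x : V → ℝ} (hy : ∀ u, 0 < y u) {θ μ : ℝ}
    (hθ : G.adjMatrix ℝ *ᵥ y = θ • y) (hμ : G.adjMatrix ℝ *ᵥ x = μ • x) :
    ∑ u, ∑ v, G.adjMatrix ℝ u v * (y u * y v * (x u / y u - x v / y v) ^ 2)
      = 2 * (θ - μ) * ∑ u, x u ^ 2 := by
  have hrow : ∀ u, ∑ v, G.adjMatrix ℝ u v * y v = θ * y u := fun u => congrFun hθ u
  have hrowx : ∀ u, ∑ v, G.adjMatrix ℝ u v * x v = μ * x u := fun u => congrFun hμ u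
  have hsq : ∑ u, ∑ v, G.adjMatrix ℝ u v * (x u ^ 2 / y u * y v) = θ * ∑ u, x u ^ 2 := by
    rw [mul_sum]
    refine sum_congr rfl fun u _ => ?_
    have : ∀ v, G.adjMatrix ℝ u v * (x u ^ 2 / y u * y v)
        = x u ^ 2 / y u * (G.adjMatrix ℝ u v * y v) := fun v => by ring
    simp_rw [this]
    rw [← mul_sum, hrow]
    have := (hy u).ne'
    field_simp
  have hsq' : ∑ u, ∑ v, G.adjMatrix ℝ u v * (x v ^ 2 / y v * y u) = θ * ∑ u, x u ^ 2 := by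
    rw [sum_comm, ← hsq]
    refine sum_congr rfl fun u _ => sum_congr rfl fun v _ => ?_
    rw [(G.isSymm_adjMatrix (α := ℝ)).apply]
  have hcross : ∑ u, ∑ v, G.adjMatrix ℝ u v * (x u * x v) = μ * ∑ u, x u ^ 2 := by
    rw [mul_sum]
    refine sum_congr rfl fun u _ => ?_
    have : ∀ v, G.adjMatrix ℝ u v * (x u * x v) = x u * (G.adjMatrix ℝ u v * x v) :=
      fun v => by ring
    simp_rw [this]
    rw [← mul_sum, hrowx]
    ring
  have hexp : ∀ u v, G.adjMatrix ℝ u v * (y u * y v * (x u / y u - x v / y v) ^ 2)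
      = G.adjMatrix ℝ u v * (x u ^ 2 / y u * y v) + G.adjMatrix ℝ u v * (x v ^ 2 / y v * y u)
        - 2 * (G.adjMatrix ℝ u v * (x u * x v)) := fun u v => by
    have := (hy u).ne'
    have := (hy v).ne'
    field_simp
    ring
  simp_rw [hexp, sum_sub_distrib, sum_add_distrib, ← mul_sum]
  rw [hsq, hsq', hcross]
  ring

/-- An eigenvector whose eigenvalue is at least that of a positive eigenvector of a connected
graph is proportional to the latter. -/
theorem div_eq_div_of_eigenvector (hconn : G.Connected) {y x : V → ℝ} (hy : ∀ u, 0 < y u)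
    {θ μ : ℝ} (hθ : G.adjMatrix ℝ *ᵥ y = θ • y) (hμ : G.adjMatrix ℝ *ᵥ x = μ • x)
    (hle : θ ≤ μ) (u v : V) : x u / y u = x v / y v := by
  have hnn : ∀ u v, 0 ≤ G.adjMatrix ℝ u v * (y u * y v * (x u / y u - x v / y v) ^ 2) :=
    fun u v => by
      have h1 := hy u
      have h2 := hy v
      have h3 : 0 ≤ G.adjMatrix ℝ u v := by rw [SimpleGraph.adjMatrix_apply]; split_ifs <;> simp
      positivity
  have hform := sum_adjMatrix_mul_sq hy hθ hμ
  have hzero : ∑ u, ∑ v, G.adjMatrix ℝ u v * (y u * y v * (x u / y u - x v / y v) ^ 2) = 0 := by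
    refine le_antisymm ?_ (sum_nonneg fun u _ => sum_nonneg fun v _ => hnn u v)
    rw [hform]
    exact mul_nonpos_of_nonpos_of_nonneg (by linarith) (sum_nonneg fun u _ => sq_nonneg _)
  have hadj : ∀ a b, G.Adj a b → x a / y a = x b / y b := fun a b hab => by
    have h1 := (sum_eq_zero_iff_of_nonneg fun u _ => sum_nonneg fun v _ => hnn u v).mp hzero a
      (mem_univ a)
    have h2 := (sum_eq_zero_iff_of_nonneg fun v _ => hnn a v).mp h1 b (mem_univ b)
    rw [SimpleGraph.adjMatrix_apply, if_pos hab, one_mul] at h2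
    have h3 := (mul_eq_zero.mp h2).resolve_left (mul_pos (hy a) (hy b)).ne'
    exact sub_eq_zero.mp (pow_eq_zero_iff two_ne_zero |>.mp h3)
  obtain ⟨p⟩ := hconn.preconnected u v
  induction p with
  | nil => rfl
  | cons h _ ih => exact (hadj _ _ h).trans ih

variable [DecidableEq V]

theorem adjMatrix_pow_apply_eq_zero {n : ℕ} {u v : V} (h : n < G.dist u v) :
    (G.adjMatrix ℝ ^ n) u v = 0 := by
  rw [SimpleGraph.adjMatrix_pow_apply_eq_card_walk]
  rw [Nat.cast_eq_zero, Fintype.card_eq_zero_iff]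
  exact ⟨fun p => absurd (SimpleGraph.dist_le p.1) (by rw [show p.1.length = n from p.2]; omega)⟩

theorem adjMatrix_pow_dist_apply_ne_zero (hconn : G.Connected) (u v : V) :
    (G.adjMatrix ℝ ^ G.dist u v) u v ≠ 0 := by
  rw [SimpleGraph.adjMatrix_pow_apply_eq_card_walk, Nat.cast_ne_zero,
    ← Nat.pos_iff_ne_zero, Fintype.card_pos_iff]
  obtain ⟨p, hp⟩ := hconn.exists_walk_length_eq_dist u v
  exact ⟨⟨p, hp⟩⟩

theorem aeval_adjMatrix_apply (f : ℝ[X]) (u v : V) :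
    aeval (G.adjMatrix ℝ) f u v
      = ∑ n ∈ range (f.natDegree + 1), f.coeff n * (G.adjMatrix ℝ ^ n) u v := by
  rw [aeval_eq_sum_range, Matrix.sum_apply]
  rfl

theorem aeval_adjMatrix_apply_eq_zero {f : ℝ[X]} {u v : V} (h : f.natDegree < G.dist u v) :
    aeval (G.adjMatrix ℝ) f u v = 0 := by
  rw [aeval_adjMatrix_apply]
  refine sum_eq_zero fun n hn => ?_
  rw [adjMatrix_pow_apply_eq_zero (by rw [mem_range] at hn; omega), mul_zero]

theorem aeval_adjMatrix_apply_ne_zero (hconn : G.Connected) {f : ℝ[X]} (hf : f ≠ 0) {u v : V}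
    (h : f.natDegree = G.dist u v) : aeval (G.adjMatrix ℝ) f u v ≠ 0 := by
  rw [aeval_adjMatrix_apply, sum_range_succ, sum_eq_zero, zero_add]
  · exact mul_ne_zero (leadingCoeff_ne_zero.mpr hf)
      (h ▸ adjMatrix_pow_dist_apply_ne_zero hconn u v)
  · intro n hn
    rw [adjMatrix_pow_apply_eq_zero (by rw [mem_range] at hn; omega), mul_zero]

/-- In a semiregular bipartite graph, the square roots of the degrees form an eigenvector. -/
theorem adjMatrix_mulVec_sqrt_degree {V1 V2 : Finset V} (hcover : V1 ∪ V2 = univ)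
    (hind1 : ∀ u ∈ V1, ∀ v ∈ V1, ¬ G.Adj u v) (hind2 : ∀ u ∈ V2, ∀ v ∈ V2, ¬ G.Adj u v)
    {δ1 δ2 : ℕ} (hdeg1 : ∀ u ∈ V1, G.degree u = δ1) (hdeg2 : ∀ v ∈ V2, G.degree v = δ2) :
    G.adjMatrix ℝ *ᵥ (fun u => √(G.degree u : ℝ))
      = (√(δ1 : ℝ) * √(δ2 : ℝ)) • fun u => √(G.degree u : ℝ) := by
  have hmem : ∀ x, x ∈ V1 ∨ x ∈ V2 := fun x =>
    mem_union.mp (hcover ▸ mem_univ x : x ∈ V1 ∪ V2)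
  have hs1 : √(δ1 : ℝ) * √(δ1 : ℝ) = δ1 := Real.mul_self_sqrt (Nat.cast_nonneg _)
  have hs2 : √(δ2 : ℝ) * √(δ2 : ℝ) = δ2 := Real.mul_self_sqrt (Nat.cast_nonneg _)
  funext u
  rw [SimpleGraph.adjMatrix_mulVec_apply, Pi.smul_apply, smul_eq_mul]
  rcases hmem u with hu | hu
  · have : ∀ v ∈ G.neighborFinset u, √(G.degree v : ℝ) = √(δ2 : ℝ) := fun v hv => by
      rw [hdeg2 v ((hmem v).resolve_left fun h =>
        hind1 u hu v h ((G.mem_neighborFinset u v).mp hv))]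
    rw [sum_congr rfl this, sum_const, SimpleGraph.card_neighborFinset_eq_degree, hdeg1 u hu,
      nsmul_eq_mul]
    linear_combination -√(δ2 : ℝ) * hs1
  · have : ∀ v ∈ G.neighborFinset u, √(G.degree v : ℝ) = √(δ1 : ℝ) := fun v hv => by
      rw [hdeg1 v ((hmem v).resolve_right fun h =>
        hind2 u hu v h ((G.mem_neighborFinset u v).mp hv))]
    rw [sum_congr rfl this, sum_const, SimpleGraph.card_neighborFinset_eq_degree, hdeg2 u hu,
      nsmul_eq_mul]
    linear_combination -√(δ1 : ℝ) * hs2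

/-- The top eigenprojection of a connected semiregular bipartite graph is constant on each column
within a stable set. -/
theorem topProjection_apply_eq (hconn : G.Connected) {V1 V2 : Finset V}
    (hcover : V1 ∪ V2 = univ)
    (hind1 : ∀ u ∈ V1, ∀ v ∈ V1, ¬ G.Adj u v) (hind2 : ∀ u ∈ V2, ∀ v ∈ V2, ¬ G.Adj u v)
    {δ1 δ2 : ℕ} (hdeg1 : ∀ u ∈ V1, G.degree u = δ1) (hdeg2 : ∀ v ∈ V2, G.degree v = δ2)
    {d : ℕ} {lam : ℕ → ℝ} (hlam : StrictAntiOn lam (Set.Iic d)) {E : ℕ → Matrix V V ℝ}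
    (hsym : ∀ i ≤ d, (E i).IsSymm) (hsum : ∑ i ∈ range (d + 1), E i = 1)
    (heig : ∀ i ≤ d, G.adjMatrix ℝ * E i = lam i • E i) {a b : V} (ha : a ∈ V1) (hb : b ∈ V1)
    (c : V) : E 0 a c = E 0 b c := by
  rcases subsingleton_or_nontrivial V with hV | hV
  · rw [Subsingleton.elim a b]
  have hpos : ∀ u, 0 < √(G.degree u : ℝ) := fun u =>
    Real.sqrt_pos.mpr (Nat.cast_pos.mpr (hconn.preconnected.degree_pos_of_nontrivial u))
  have hθ := adjMatrix_mulVec_sqrt_degree hcover hind1 hind2 hdeg1 hdeg2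
  have hle := eigenvalue_le_lam_zero hlam hsym G.isSymm_adjMatrix hsum heig
    (fun h => (hpos a).ne' (congrFun h a)) hθ
  have hcol : G.adjMatrix ℝ *ᵥ (fun u => E 0 u c) = lam 0 • fun u => E 0 u c := by
    funext u
    exact congrFun (congrFun (heig 0 (Nat.zero_le d)) u) c
  have h := div_eq_div_of_eigenvector hconn hpos hθ hcol hle a b
  simp only [hdeg1 a ha, hdeg1 b hb] at h
  have hne := (hpos a).ne'
  rw [hdeg1 a ha] at hne
  exact (div_left_inj' hne).mp h

end Graph

section DiscreteOrthogonality

/-- A nonzero polynomial of degree at most `d` has positive norm for a positive weight on `d + 1`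
distinct points. -/
theorem discInner_self_pos {d : ℕ} {lam w : ℕ → ℝ} (hlam : Set.InjOn lam (Set.Iic d))
    (hw : ∀ i ≤ d, 0 < w i) {f : ℝ[X]} (hf : f ≠ 0) (hdeg : f.natDegree ≤ d) :
    0 < discInner (range (d + 1)) lam w f f := by
  have hle : ∀ i ∈ range (d + 1), i ≤ d := fun i hi => Nat.lt_succ_iff.mp (mem_range.mp hi)
  have hnn : ∀ i ∈ range (d + 1), 0 ≤ w i * f.eval (lam i) * f.eval (lam i) := fun i hi => by
    rw [mul_assoc]
    exact mul_nonneg (hw i (hle i hi)).le (mul_self_nonneg _)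
  refine lt_of_le_of_ne (sum_nonneg hnn) fun h => hf ?_
  have hroot := (sum_eq_zero_iff_of_nonneg hnn).mp h.symm
  refine eq_zero_of_natDegree_lt_card_of_eval_eq_zero' f ((range (d + 1)).image lam) ?_ ?_
  · intro x hx
    obtain ⟨i, hi, rfl⟩ := mem_image.mp hx
    have := hroot i hi
    rw [mul_assoc] at this
    exact mul_self_eq_zero.mp ((mul_eq_zero.mp this).resolve_left (hw i (hle i hi)).ne')
  · rw [card_image_of_injOn, card_range]
    · omega
    · exact hlam.mono fun i hi => hle i (mem_coe.mp hi)

/-- The sum of the orthogonal polynomials, normalized by `‖p i‖² = p i (lam 0)`, is a multiple of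
the Lagrange polynomial at `lam 0`. -/
theorem weight_mul_sum_eval_eq {d : ℕ} {lam w : ℕ → ℝ} {p : ℕ → ℝ[X]}
    (horth : ∀ i ≤ d, ∀ j ≤ d, i ≠ j → discInner (range (d + 1)) lam w (p i) (p j) = 0)
    (hnorm : ∀ i ≤ d, discInner (range (d + 1)) lam w (p i) (p i) = (p i).eval (lam 0))
    (hne : ∀ i ≤ d, (p i).eval (lam 0) ≠ 0) {j : ℕ} (hj : j ≤ d) :
    w j * ∑ i ∈ range (d + 1), (p i).eval (lam j) = if j = 0 then 1 else 0 := by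
  let P : Matrix (Fin (d + 1)) (Fin (d + 1)) ℝ := fun i j => (p i).eval (lam j)
  let Q : Matrix (Fin (d + 1)) (Fin (d + 1)) ℝ :=
    fun j i => w j * (p i).eval (lam j) / (p i).eval (lam 0)
  have hle : ∀ i : Fin (d + 1), (i : ℕ) ≤ d := fun i => Nat.lt_succ_iff.mp i.2
  have hPQ : P * Q = 1 := by
    ext i k
    have hentry : (P * Q) i k
        = discInner (range (d + 1)) lam w (p i) (p k) / (p k).eval (lam 0) := by
      rw [Matrix.mul_apply, discInner, ← Fin.sum_univ_eq_sum_range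
        (fun j => w j * (p i).eval (lam j) * (p k).eval (lam j)), sum_div]
      exact sum_congr rfl fun j _ => by simp only [P, Q]; ring
    rw [hentry, Matrix.one_apply]
    split_ifs with h
    · rw [h, hnorm k (hle k), div_self (hne k (hle k))]
    · rw [horth i (hle i) k (hle k) fun h' => h (Fin.ext h'), zero_div]
  have hQP1 : Q * P = 1 := mul_eq_one_comm.mp hPQ
  have hQP := congrFun (congrFun hQP1 ⟨j, Nat.lt_succ_iff.mpr hj⟩) 0
  rw [Matrix.mul_apply, Matrix.one_apply] at hQP
  rw [← Fin.sum_univ_eq_sum_range (fun i => (p i).eval (lam j)), mul_sum]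
  convert hQP using 1
  · refine sum_congr rfl fun i _ => ?_
    simp only [P, Q, Fin.val_zero]
    rw [div_mul_cancel₀ _ (hne i (hle i))]
  · simp [Fin.ext_iff]

end DiscreteOrthogonality

/-- Inequality (5): for a connected bipartite `(δ₁,δ₂)`-semiregular graph with `d+1`
distinct eigenvalues, `d` even and `m(0) ≠ |n₁ − n₂|`, the average number of vertices
at distance `d` from a vertex of `V₁` satisfies `k̄_{1,d} ≤ p_{1,d}(λ_0)`. -/
theorem stmt_14 {V : Type*} [Fintype V] [DecidableEq V]
    (G : SimpleGraph V) [DecidableRel G.Adj] (hconn : G.Connected)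
    (V1 V2 : Finset V) (hcover : V1 ∪ V2 = Finset.univ) (hdisj : Disjoint V1 V2)
    (hind1 : ∀ u ∈ V1, ∀ v ∈ V1, ¬ G.Adj u v)
    (hind2 : ∀ u ∈ V2, ∀ v ∈ V2, ¬ G.Adj u v)
    (δ1 δ2 : ℕ)
    (hdeg1 : ∀ u ∈ V1, G.degree u = δ1) (hdeg2 : ∀ v ∈ V2, G.degree v = δ2)
    (d : ℕ) (lam : ℕ → ℝ) (hlam : StrictAntiOn lam (Set.Iic d))
    (E : ℕ → Matrix V V ℝ)
    (hsym : ∀ i ≤ d, (E i).IsSymm)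
    (hsum : ∑ i ∈ Finset.range (d + 1), E i = 1)
    (hmul : ∀ i ≤ d, ∀ j ≤ d, E i * E j = if i = j then E i else 0)
    (heig : ∀ i ≤ d, G.adjMatrix ℝ * E i = lam i • E i)
    (hnz : ∀ i ≤ d, E i ≠ 0)
    (hEven : Even d)
    -- `m(0) ≠ |n₁ − n₂|`
    (hm0 : ∑ i ∈ (Finset.range (d + 1)).filter (fun i => lam i = 0),
        Matrix.trace (E i) ≠ |(V1.card : ℝ) - (V2.card : ℝ)|)
    -- the orthogonal polynomials for `⟨·,·⟩_{V₁}`, with weights `w_{1,i}`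
    (p1 : ℕ → Polynomial ℝ)
    (hp1deg : ∀ i ≤ d, (p1 i).degree = (i : WithBot ℕ))
    (hp1orth : ∀ i ≤ d, ∀ j ≤ d, i ≠ j →
      discInner (Finset.range (d + 1)) lam
        (fun i => (∑ u ∈ V1, E i u u) / (V1.card : ℝ)) (p1 i) (p1 j) = 0)
    (hp1norm : ∀ i ≤ d,
      discInner (Finset.range (d + 1)) lam
          (fun i => (∑ u ∈ V1, E i u u) / (V1.card : ℝ)) (p1 i) (p1 i)
        = (p1 i).eval (lam 0)) :
    (1 / (V1.card : ℝ)) * ∑ u ∈ V1, ((sphere G u d).card : ℝ)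
      ≤ (p1 d).eval (lam 0) := by
  classical
  have hle : ∀ i ∈ range (d + 1), i ≤ d := fun i hi => Nat.lt_succ_iff.mp (mem_range.mp hi)
  set w : ℕ → ℝ := fun i => (∑ u ∈ V1, E i u u) / (V1.card : ℝ) with hw
  have hdiag : ∀ i ≤ d, ∀ u, E i u u = ∑ v, E i u v ^ 2 := fun i hi =>
    diag_eq_sum_sq (hsym i hi) (by rw [hmul i hi i hi, if_pos rfl])
  have hdiag0 : ∀ i ≤ d, ∀ u, 0 ≤ E i u u := fun i hi u => by
    rw [hdiag i hi]; exact sum_nonneg fun v _ => sq_nonneg _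
  have hw0 : ∀ i ≤ d, 0 ≤ w i := fun i hi =>
    div_nonneg (sum_nonneg fun u _ => hdiag0 i hi u) (Nat.cast_nonneg _)
  have hrhs : 0 ≤ (p1 d).eval (lam 0) := by
    rw [← hp1norm d le_rfl]
    refine sum_nonneg fun i hi => ?_
    rw [mul_assoc]
    exact mul_nonneg (hw0 i (hle i hi)) (mul_self_nonneg _)
  rcases V1.eq_empty_or_nonempty with hV1 | hV1
  · simpa [hV1] using hrhs
  have hn1 : (0 : ℝ) < V1.card := Nat.cast_pos.mpr hV1.card_pos
  have haeval := aeval_eq_sum_eval_smul hsum heig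
  by_cases hpos : ∀ i ≤ d, 0 < w i
  · have hp1ne : ∀ i ≤ d, p1 i ≠ 0 := fun i hi h => by simpa [h] using hp1deg i hi
    have hp1nat : ∀ i ≤ d, (p1 i).natDegree = i := fun i hi =>
      natDegree_eq_of_degree_eq_some (hp1deg i hi)
    have hne : ∀ i ≤ d, (p1 i).eval (lam 0) ≠ 0 := fun i hi => by
      rw [← hp1norm i hi]
      exact (discInner_self_pos hlam.injOn hpos (hp1ne i hi) ((hp1nat i hi).trans_le hi)).ne'
    have hq : ∀ j ≤ d, _ := fun j => weight_mul_sum_eval_eq (j := j) hp1orth hp1norm hne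
    have htop : ∀ a ∈ V1, ∀ b ∈ V1, ∀ c, E 0 a c = E 0 b c := fun a ha b hb =>
      topProjection_apply_eq hconn hcover hind1 hind2 hdeg1 hdeg2 hlam hsym hsum heig ha hb
    have hE0 : ∀ a ∈ V1, ∀ b ∈ V1, E 0 a b = w 0 := fun a ha b hb => by
      have : ∀ u ∈ V1, E 0 u u = E 0 a b := fun u hu => by
        rw [htop u hu b hb u, (hsym 0 (Nat.zero_le d)).apply, htop u hu a ha b]
      simp only [hw]
      rw [sum_congr rfl this, sum_const, nsmul_eq_mul, mul_div_cancel_left₀ _ hn1.ne']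
    -- the sum of the `p1 i` evaluated at the adjacency matrix is all ones on `V1 × V1`
    have hones : ∀ a ∈ V1, ∀ b ∈ V1,
        ∑ i ∈ range (d + 1), aeval (G.adjMatrix ℝ) (p1 i) a b = 1 := fun a ha b hb => by
      rw [← Matrix.sum_apply, ← map_sum, haeval, Matrix.sum_apply,
        sum_eq_single_of_mem 0 (mem_range.mpr d.succ_pos)]
      · rw [Matrix.smul_apply, smul_eq_mul, hE0 a ha b hb, eval_finsetSum, mul_comm,
          hq 0 (Nat.zero_le d), if_pos rfl]
      · intro j hj hj0
        have := hq j (hle j hj)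
        rw [if_neg hj0] at this
        rw [Matrix.smul_apply, eval_finsetSum,
          (mul_eq_zero.mp this).resolve_left (hpos j (hle j hj)).ne', zero_smul]
    have hentry : ∀ a ∈ V1, ∀ b, G.dist a b = d → aeval (G.adjMatrix ℝ) (p1 d) a b = 1 :=
      fun a ha b hab => by
        obtain ⟨p, hp⟩ := hconn.exists_walk_length_eq_dist a b
        have hb : b ∈ V1 := by
          have := (even_length_iff_mem_iff_mem hcover hind1 hind2 p).mp
            (by rwa [hp, hab])
          exact this.mp ha
        rw [← hones a ha b hb, sum_range_succ, sum_eq_zero, zero_add]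
        intro i hi
        have hid := mem_range.mp hi
        exact aeval_adjMatrix_apply_eq_zero (by rw [hp1nat i hid.le, hab]; exact hid)
    have hrow : ∀ u ∈ V1, ((sphere G u d).card : ℝ)
        ≤ ∑ i ∈ range (d + 1), (p1 d).eval (lam i) ^ 2 * E i u u := fun u hu => by
      have hsymm : (aeval (G.adjMatrix ℝ) (p1 d)).IsSymm := by
        rw [haeval]
        unfold Matrix.IsSymm
        rw [transpose_sum]
        exact sum_congr rfl fun i hi => by rw [transpose_smul, (hsym i (hle i hi)).eq]
      have hsq : ∑ v, aeval (G.adjMatrix ℝ) (p1 d) u v ^ 2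
          = ∑ i ∈ range (d + 1), (p1 d).eval (lam i) ^ 2 * E i u u := by
        have h := congrFun (congrFun (haeval (p1 d * p1 d)) u) u
        rw [map_mul, Matrix.mul_apply, Matrix.sum_apply] at h
        convert h using 1
        · exact sum_congr rfl fun v _ => by rw [hsymm.apply, sq]
        · exact sum_congr rfl fun i _ => by rw [Matrix.smul_apply, eval_mul, sq, smul_eq_mul]
      rw [← hsq, card_eq_sum_ones, Nat.cast_sum]
      refine le_trans (le_of_eq (sum_congr rfl fun v hv => ?_))
        (sum_le_univ_sum_of_nonneg (s := sphere G u d) fun v => sq_nonneg _)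
      rw [hentry u hu v (mem_filter.mp hv).2, Nat.cast_one, one_pow]
    rw [one_div, inv_mul_le_iff₀ hn1]
    refine (sum_le_sum hrow).trans (le_of_eq ?_)
    rw [sum_comm, ← hp1norm d le_rfl, discInner, mul_sum]
    refine sum_congr rfl fun i _ => ?_
    rw [← mul_sum]
    simp only [hw]
    field_simp
  · push Not at hpos
    obtain ⟨j, hj, hwj⟩ := hpos
    have hsum0 : ∑ u ∈ V1, E j u u = 0 :=
      (div_eq_zero_iff.mp (le_antisymm hwj (hw0 j hj))).resolve_right hn1.ne'
    have hEj : ∀ u ∈ V1, ∀ v, E j u v = 0 := fun u hu v => by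
      have h := (sum_eq_zero_iff_of_nonneg fun u _ => hdiag0 j hj u).mp hsum0 u hu
      rw [hdiag j hj] at h
      exact pow_eq_zero_iff two_ne_zero |>.mp
        ((sum_eq_zero_iff_of_nonneg fun v _ => sq_nonneg _).mp h v (mem_univ v))
    -- a polynomial of degree `d` in the adjacency matrix vanishes on the rows of `V1`
    let f : ℝ[X] := ∏ i ∈ (range (d + 1)).erase j, (X - C (lam i))
    have hmonic : f.Monic := monic_prod_of_monic _ _ fun i _ => monic_X_sub_C _
    have hfdeg : f.natDegree = d := by
      rw [natDegree_prod_of_monic _ _ fun i _ => monic_X_sub_C _]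
      simp [card_erase_of_mem (mem_range.mpr (Nat.lt_succ_iff.mpr hj))]
    have hfA : ∀ u ∈ V1, ∀ v, aeval (G.adjMatrix ℝ) f u v = 0 := fun u hu v => by
      rw [haeval, Matrix.sum_apply]
      refine sum_eq_zero fun i hi => ?_
      rw [Matrix.smul_apply]
      by_cases hij : i = j
      · rw [hij, hEj u hu, smul_zero]
      · have : f.eval (lam i) = 0 := by
          rw [eval_prod]
          exact prod_eq_zero (mem_erase.mpr ⟨hij, hi⟩) (by simp)
        rw [this, zero_smul]
    have hempty : ∀ u ∈ V1, ((sphere G u d).card : ℝ) = 0 := fun u hu => by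
      rw [Nat.cast_eq_zero, card_eq_zero, sphere, filter_eq_empty_iff]
      intro v _ huv
      exact aeval_adjMatrix_apply_ne_zero hconn hmonic.ne_zero (hfdeg.trans huv.symm) (hfA u hu v)
    rw [sum_congr rfl hempty, sum_const_zero, mul_zero]
    exact hrhs
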